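/- arXiv:1509.08069 — 11 statements merged into one kernel-verified Lean document; each statement's English description precedes it below -/
import Mathlib

section
/- If (a,b,c) ∈ ℂ³ satisfies the equations (E1): −(1/64)·(−4 + 3a⁴ + 8a³b + 8a²b² − 4a³c − 8a²bc)·(4 + 3a⁴ + 8a³b + 8a²b² − 4a³c − 8a²bc) = 0 and −(1/8)·a²·(a⁴ − 8a²b² − 16ab³ − 8b⁴ + 8a²bc + 24ab²c + 16b³c − 2a²c² − 8abc² − 8b²c²) = 0, then a is a root of the polynomial (X⁸ + 24X⁴ + 16)·(X⁸ − 24X⁴ + 16); more precisely, if 4 + 3a⁴ + 8a³b + 8a²b² − 4a³c − 8a²bc = 0 then a⁸ + 24a⁴ + 16 = 0, and if −4 + 3a⁴ + 8a³b + 8a²b² − 4a³c − 8a²bc = 0 then a⁸ − 24a⁴ + 16 = 0. -/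
/-- If `(a,b,c) ∈ ℂ³` satisfies the equations (E1), then `a` is a root of
`(X⁸ + 24X⁴ + 16)(X⁸ − 24X⁴ + 16)`; more precisely, if `f₁ = 0` then
`a⁸ + 24a⁴ + 16 = 0`, and if `f₂ = 0` then `a⁸ − 24a⁴ + 16 = 0`. -/
theorem a_root_of_octics (a b c : ℂ)
    (h1 : -(1/64) * (-4 + 3*a^4 + 8*a^3*b + 8*a^2*b^2 - 4*a^3*c - 8*a^2*b*c) *
      (4 + 3*a^4 + 8*a^3*b + 8*a^2*b^2 - 4*a^3*c - 8*a^2*b*c) = 0)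
    (h2 : -(1/8) * a^2 * (a^4 - 8*a^2*b^2 - 16*a*b^3 - 8*b^4 + 8*a^2*b*c + 24*a*b^2*c
      + 16*b^3*c - 2*a^2*c^2 - 8*a*b*c^2 - 8*b^2*c^2) = 0) :
    (a^8 + 24*a^4 + 16) * (a^8 - 24*a^4 + 16) = 0 ∧
    (4 + 3*a^4 + 8*a^3*b + 8*a^2*b^2 - 4*a^3*c - 8*a^2*b*c = 0 → a^8 + 24*a^4 + 16 = 0) ∧
    (-4 + 3*a^4 + 8*a^3*b + 8*a^2*b^2 - 4*a^3*c - 8*a^2*b*c = 0 → a^8 - 24*a^4 + 16 = 0) := by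
  have k1 : 4 + 3*a^4 + 8*a^3*b + 8*a^2*b^2 - 4*a^3*c - 8*a^2*b*c = 0 →
      a^8 + 24*a^4 + 16 = 0 := by
    intro h
    linear_combination
      (4 + 3*a^4 - (8*a^3*b + 8*a^2*b^2 - 4*a^3*c - 8*a^2*b*c)) * h + 64 * a^2 * h2
  have k2 : -4 + 3*a^4 + 8*a^3*b + 8*a^2*b^2 - 4*a^3*c - 8*a^2*b*c = 0 →
      a^8 - 24*a^4 + 16 = 0 := by
    intro h
    linear_combination
      (-4 + 3*a^4 - (8*a^3*b + 8*a^2*b^2 - 4*a^3*c - 8*a^2*b*c)) * h + 64 * a^2 * h2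
  refine ⟨?_, k1, k2⟩
  rcases mul_eq_zero.mp h1 with h | h
  · rcases mul_eq_zero.mp h with h | h
    · norm_num at h
    · rw [k2 h, mul_zero]
  · rw [k1 h, zero_mul]
end

section
/- Let m = (−3 + 2√2)^{1/4} ∈ ℂ be a fixed fourth root of −3+2√2. Then ℚ(m) is a Galois extension of ℚ of degree 8 whose Galois group is isomorphic to the dihedral group D₈ of order 8. -/
open IntermediateField

lemma qm_dihedral {G : Type*} [Group G] (ρ s : G) (h4 : ρ ^ 4 = 1) (h2 : ρ ^ 2 ≠ 1)
    (hs : s * s = 1) (hsr : s * ρ * (s * ρ) = 1) :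
    ∃ φ : DihedralGroup 4 →* G, Function.Injective φ := by
  have hz : ∀ i : ZMod 4, ∀ n : ℤ, (n : ZMod 4) = i → ρ ^ n = ρ ^ (i.val) := by
    intro i n h
    subst h
    rw [← zpow_natCast, zpow_eq_zpow_iff_modEq]
    have h1 : ((orderOf ρ : ℕ) : ℤ) ∣ 4 := by
      exact_mod_cast orderOf_dvd_of_pow_eq_one h4
    refine Int.ModEq.of_dvd h1 ?_
    rw [ZMod.val_intCast]
    simp [Int.ModEq]
  have key : ρ * s = s * ρ⁻¹ := by
    have hsi : s⁻¹ = s := inv_eq_of_mul_eq_one_right hs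
    have : ρ * (s * ρ) = s⁻¹ := by
      rw [eq_inv_iff_mul_eq_one]
      have : s * (ρ * (s * ρ)) = 1 := by rw [← hsr]; group
      exact mul_eq_one_comm.mp (by simpa using this)
    rw [hsi] at this
    rw [eq_mul_inv_iff_mul_eq, mul_assoc, this]
  have keyz : ∀ n : ℤ, ρ ^ n * s = s * ρ ^ (-n) := by
    intro n
    have : SemiconjBy s ρ⁻¹ ρ := key.symm
    have := (this.zpow_right n).eq
    rw [← this, inv_zpow, zpow_neg]
  let c : ZMod 4 → ℤ := fun i => (i.val : ℤ)
  have hc : ∀ i : ZMod 4, ((c i : ℤ) : ZMod 4) = i := by intro i; simp [c]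
  have hzz : ∀ n k : ℤ, (n : ZMod 4) = k → ρ ^ n = ρ ^ k := by
    intro n k h
    rw [hz _ n rfl, hz _ k rfl, h]
  let f : DihedralGroup 4 → G := fun x => match x with
    | .r i => ρ ^ (c i)
    | .sr i => s * ρ ^ (c i)
  have fr : ∀ i, f (.r i) = ρ ^ (c i) := fun _ => rfl
  have fsr : ∀ i, f (.sr i) = s * ρ ^ (c i) := fun _ => rfl
  let φ : DihedralGroup 4 →* G := MonoidHom.mk' f (by
    rintro (i | i) (j | j)
    · rw [DihedralGroup.r_mul_r, fr, fr, fr, ← zpow_add]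
      exact hzz _ _ (by push_cast; simp only [hc])
    · rw [DihedralGroup.r_mul_sr, fr, fsr, fsr, ← mul_assoc, keyz, mul_assoc, ← zpow_add]
      rw [hzz (c (j - i)) (-c i + c j) (by push_cast; simp only [hc]; ring)]
    · rw [DihedralGroup.sr_mul_r, fr, fsr, fsr, mul_assoc, ← zpow_add]
      rw [hzz (c (i + j)) (c i + c j) (by push_cast; simp only [hc])]
    · rw [DihedralGroup.sr_mul_sr, fr, fsr, fsr, mul_assoc, ← mul_assoc _ s, keyz, mul_assoc,
        ← mul_assoc s s, hs, one_mul, ← zpow_add]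
      exact hzz _ _ (by push_cast; simp only [hc]; ring))
  have hord : orderOf ρ = 4 := by
    have := orderOf_eq_prime_pow (p := 2) (n := 1) (x := ρ) (by simpa using h2) (by simpa using h4)
    simpa using this
  refine ⟨φ, (injective_iff_map_eq_one φ).2 ?_⟩
  rintro (i | i) h
  · change ρ ^ (c i) = 1 at h
    rw [← orderOf_dvd_iff_zpow_eq_one, hord] at h
    have : ((c i : ℤ) : ZMod 4) = 0 := (ZMod.intCast_zmod_eq_zero_iff_dvd _ _).2 h
    rw [hc] at this
    subst this; rfl
  · change s * ρ ^ (c i) = 1 at h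
    exfalso
    have hs' : s = ρ ^ (-c i) := by rw [zpow_neg]; exact eq_inv_of_mul_eq_one_left h
    have hcomm : ρ * s = s * ρ := by
      rw [hs']; exact (Commute.refl ρ).zpow_right _
    rw [hcomm] at key
    have := mul_left_cancel key
    apply h2
    rw [pow_two]; nth_rewrite 1 [this]; simp

lemma qm_irr (p q : ℚ) (h : (p : ℝ) + q * √2 = 0) : p = 0 ∧ q = 0 := by
  have hi := irrational_sqrt_two
  have hq : q = 0 := by
    by_contra hq
    apply hi
    refine ⟨-p / q, ?_⟩
    have : (q : ℝ) ≠ 0 := by exact_mod_cast hq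
    push_cast
    field_simp
    linarith
  subst hq
  simp at h
  exact ⟨h, rfl⟩

/-- membership in the field generated by the square root of 2 -/
def QmS (x : ℝ) : Prop := ∃ p q : ℚ, x = p + q * √2

lemma QmS.add {x y : ℝ} (hx : QmS x) (hy : QmS y) : QmS (x + y) := by
  obtain ⟨p, q, rfl⟩ := hx
  obtain ⟨p', q', rfl⟩ := hy
  exact ⟨p + p', q + q', by push_cast; ring⟩

lemma QmS.mul {x y : ℝ} (hx : QmS x) (hy : QmS y) : QmS (x * y) := by
  obtain ⟨p, q, rfl⟩ := hx
  obtain ⟨p', q', rfl⟩ := hy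
  have h2 : √2 * √2 = (2 : ℝ) := Real.mul_self_sqrt (by norm_num)
  exact ⟨p * p' + 2 * q * q', p * q' + q * p', by
    push_cast; linear_combination (q * q' : ℝ) * h2⟩

lemma QmS.neg {x : ℝ} (hx : QmS x) : QmS (-x) := by
  obtain ⟨p, q, rfl⟩ := hx
  exact ⟨-p, -q, by push_cast; ring⟩

lemma QmS.inv {x : ℝ} (hx : QmS x) : QmS (x⁻¹) := by
  obtain ⟨p, q, rfl⟩ := hx
  have h2 : √2 * √2 = (2 : ℝ) := Real.mul_self_sqrt (by norm_num)
  by_cases h0 : (p : ℝ) + q * √2 = 0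
  · rw [h0]; exact ⟨0, 0, by simp⟩
  have hc : (p : ℝ) - q * √2 ≠ 0 := by
    intro h
    have := qm_irr p (-q) (by push_cast; linarith)
    apply h0
    have h1 : q = 0 := by linarith [this.2]
    simp [this.1, h1]
  have hn : (p : ℝ) ^ 2 - 2 * q ^ 2 ≠ 0 := by
    have : (p : ℝ) ^ 2 - 2 * q ^ 2 = (p + q * √2) * (p - q * √2) := by
      linear_combination (q ^ 2 : ℝ) * h2
    rw [this]; exact mul_ne_zero h0 hc
  refine ⟨p / (p ^ 2 - 2 * q ^ 2), -q / (p ^ 2 - 2 * q ^ 2), ?_⟩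
  push_cast
  apply inv_eq_of_mul_eq_one_right
  have e : ((p : ℝ) + q * √2) * (p / (p ^ 2 - 2 * q ^ 2) + -q / (p ^ 2 - 2 * q ^ 2) * √2)
      = ((p : ℝ) ^ 2 - q ^ 2 * (√2 * √2)) / (p ^ 2 - 2 * q ^ 2) := by ring
  rw [e, h2, div_eq_one_iff_eq hn]
  ring

lemma qm_nosq (P Q : ℝ) (hP : QmS P) (h1 : P ^ 2 = Q ^ 2) (h2 : 2 * P * Q = √2 - 1) : False := by
  have hc : (0 : ℝ) < √2 - 1 := by
    have : (1 : ℝ) < √2 := by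
      rw [Real.lt_sqrt] <;> norm_num
    linarith
  have h22 : √2 * √2 = (2 : ℝ) := Real.mul_self_sqrt (by norm_num)
  rcases sq_eq_sq_iff_eq_or_eq_neg.1 h1 with h | h
  · subst h
    obtain ⟨p, q, rfl⟩ := hP
    have := (qm_irr (2 * p ^ 2 + 4 * q ^ 2 + 1) (4 * p * q - 1) (by
      push_cast; linear_combination h2 - 2 * (q : ℝ) ^ 2 * h22)).1
    nlinarith [sq_nonneg p, sq_nonneg q]
  · subst h
    nlinarith [sq_nonneg Q]

lemma qm_complex (J : ℂ) (hJ : J ^ 2 = -1) (A B : ℝ) (h : (A : ℂ) + B * J = 0) :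
    A = 0 ∧ B = 0 := by
  have : ((A ^ 2 + B ^ 2 : ℝ) : ℂ) = 0 := by
    push_cast
    linear_combination (A - B * J : ℂ) * h + (B ^ 2 : ℂ) * hJ
  have : A ^ 2 + B ^ 2 = 0 := by exact_mod_cast this
  constructor <;> nlinarith [sq_nonneg A, sq_nonneg B]

lemma qm_indep (m : ℂ) (hm : m^4 = -3 + 2 * Real.sqrt 2) (g : ℕ → ℚ)
    (h : ∑ i ∈ Finset.range 8, (g i : ℂ) * m ^ i = 0) : ∀ i < 8, g i = 0 := by
  have h22 : √2 * √2 = (2 : ℝ) := Real.mul_self_sqrt (by norm_num)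
  have h22c : (√2 : ℂ) * √2 = 2 := by exact_mod_cast h22
  have hc0 : √2 - 1 ≠ (0 : ℝ) := by
    intro h
    have : √2 = 1 := by linarith
    rw [this] at h22; norm_num at h22
  obtain ⟨J, hJd⟩ : ∃ J : ℂ, J = m ^ 2 * (√2 + 1) := ⟨_, rfl⟩
  have hJ : J ^ 2 = -1 := by
    rw [hJd]
    linear_combination (√2 + 1 : ℂ) ^ 2 * hm + (2 * (√2 : ℂ) + 1) * h22c
  have hm2 : m ^ 2 = J * (√2 - 1) := by
    rw [hJd]; linear_combination (-m ^ 2) * h22c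
  let w : ℝ := -3 + 2 * √2
  have hw : m ^ 4 = (w : ℂ) := by simp [w, hm]
  obtain ⟨A, hA⟩ : ∃ A : ℝ, A = g 0 + g 4 * w := ⟨_, rfl⟩
  obtain ⟨B, hB⟩ : ∃ A : ℝ, A = (√2 - 1) * (g 2 + g 6 * w) := ⟨_, rfl⟩
  obtain ⟨C, hC⟩ : ∃ A : ℝ, A = g 1 + g 5 * w := ⟨_, rfl⟩
  obtain ⟨D, hD⟩ : ∃ A : ℝ, A = (√2 - 1) * (g 3 + g 7 * w) := ⟨_, rfl⟩
  have hwS : QmS w := ⟨-3, 2, by simp [w]⟩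
  have hcS : QmS (√2 - 1) := ⟨-1, 1, by push_cast; ring⟩
  have hqS : ∀ q : ℚ, QmS q := fun q => ⟨q, 0, by simp⟩
  have hAS : QmS A := by rw [hA]; exact (hqS _).add ((hqS _).mul hwS)
  have hBS : QmS B := by rw [hB]; exact hcS.mul ((hqS _).add ((hqS _).mul hwS))
  have hCS : QmS C := by rw [hC]; exact (hqS _).add ((hqS _).mul hwS)
  have hDS : QmS D := by rw [hD]; exact hcS.mul ((hqS _).add ((hqS _).mul hwS))
  have hmain : ((A : ℂ) + B * J) + m * (C + D * J) = 0 := by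
    rw [← h, hA, hB, hC, hD]
    simp only [Finset.sum_range_succ, Finset.sum_range_zero]
    push_cast
    rw [← hw]
    linear_combination (-(g 2 + g 6 * m ^ 4 + m * (g 3 + g 7 * m ^ 4)) : ℂ) * hm2
  have hCD : C = 0 ∧ D = 0 := by
    by_contra hne
    have hn : C ^ 2 + D ^ 2 ≠ 0 := by
      intro h0
      apply hne
      constructor <;> nlinarith [sq_nonneg C, sq_nonneg D]
    obtain ⟨P, hP⟩ : ∃ P : ℝ, P = -(A * C + B * D) * (C * C + D * D)⁻¹ := ⟨_, rfl⟩
    obtain ⟨Q, hQ⟩ : ∃ Q : ℝ, Q = -(B * C - A * D) * (C * C + D * D)⁻¹ := ⟨_, rfl⟩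
    have hPS : QmS P := by
      rw [hP]
      exact ((hAS.mul hCS).add (hBS.mul hDS)).neg.mul ((hCS.mul hCS).add (hDS.mul hDS)).inv
    have hn' : (C : ℂ) * C + D * D ≠ 0 := by
      have : C * C + D * D ≠ 0 := by simpa [pow_two] using hn
      exact_mod_cast this
    have hmPQ : m = P + Q * J := by
      rw [hP, hQ]
      push_cast
      have e : -((A : ℂ) * C + B * D) * ((C : ℂ) * C + D * D)⁻¹ +
          -(B * C - A * D) * ((C : ℂ) * C + D * D)⁻¹ * J
          = (-((A : ℂ) * C + B * D) - (B * C - A * D) * J) / (C * C + D * D) := by ring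
      rw [e, eq_div_iff hn']
      linear_combination (C - D * J : ℂ) * hmain + (B * D + m * D ^ 2 : ℂ) * hJ
    have := qm_complex J hJ (P ^ 2 - Q ^ 2) (2 * P * Q - (√2 - 1)) (by
      push_cast
      rw [hmPQ] at hm2
      linear_combination hm2 - (Q ^ 2 : ℂ) * hJ)
    exact qm_nosq P Q hPS (by linarith [this.1]) (by linarith [this.2])
  rw [hCD.1, hCD.2] at hmain
  have hAB := qm_complex J hJ A B (by simpa using hmain)
  have fin : ∀ p q : ℚ, (p : ℝ) + q * w = 0 → p = 0 ∧ q = 0 := by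
    intro p q h
    have := qm_irr (p - 3 * q) (2 * q) (by
      push_cast; simp only [w] at h; linear_combination h)
    constructor <;> linarith [this.1, this.2]
  have e1 := fin _ _ (hA ▸ hAB.1)
  have e2 := fin _ _ (hC ▸ hCD.1)
  have e3 := fin _ _ ((mul_eq_zero.1 (hB ▸ hAB.2)).resolve_left hc0)
  have e4 := fin _ _ ((mul_eq_zero.1 (hD ▸ hCD.2)).resolve_left hc0)
  intro i hi
  interval_cases i
  exacts [e1.1, e2.1, e3.1, e4.1, e1.2, e2.2, e3.2, e4.2]

open Polynomial in
lemma qm_minpoly (m : ℂ) (hm : m^4 = -3 + 2 * Real.sqrt 2) :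
    minpoly ℚ m = X ^ 8 + 6 * X ^ 4 + 1 := by
  have h22c : (√2 : ℂ) * √2 = 2 := by
    exact_mod_cast (Real.mul_self_sqrt (by norm_num) : √2 * √2 = (2 : ℝ))
  have hdeg : (X ^ 8 + 6 * X ^ 4 + 1 : ℚ[X]).natDegree = 8 := by
    have : (6 : ℚ[X]) = C 6 := rfl
    rw [this]; compute_degree!
  have hmon : (X ^ 8 + 6 * X ^ 4 + 1 : ℚ[X]).Monic := by
    have : (6 : ℚ[X]) = C 6 := rfl
    rw [this]; monicity!
  have hroot : aeval m (X ^ 8 + 6 * X ^ 4 + 1 : ℚ[X]) = 0 := by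
    simp only [map_add, map_mul, map_pow, map_one, aeval_X, map_ofNat]
    linear_combination (m ^ 4 + 3 + 2 * √2) * hm + 4 * h22c
  have hint : IsIntegral ℚ m := ⟨_, hmon, by simpa [aeval_def] using hroot⟩
  have hdvd := minpoly.dvd ℚ m hroot
  refine (eq_of_monic_of_dvd_of_natDegree_le (minpoly.monic hint) hmon hdvd ?_).symm
  rw [hdeg]
  by_contra! hlt
  have h0 := minpoly.aeval ℚ m
  rw [aeval_eq_sum_range' hlt] at h0
  have := qm_indep m hm (fun i => (minpoly ℚ m).coeff i) (by
    rw [← h0]; refine Finset.sum_congr rfl fun i _ => ?_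
    rw [Algebra.smul_def]; simp)
  have hl := (minpoly.monic hint).coeff_natDegree
  rw [this _ hlt] at hl
  exact zero_ne_one hl

/-- Let `m` be a fixed fourth root of `−3 + 2√2` in `ℂ`. Then `ℚ(m)/ℚ` is a Galois
extension of degree 8 whose Galois group is isomorphic to the dihedral group `D₈`
of order 8. -/
theorem galois_group_Qm (m : ℂ) (hm : m^4 = -3 + 2 * Real.sqrt 2) :
    IsGalois ℚ ↥(adjoin ℚ ({m} : Set ℂ)) ∧
    Module.finrank ℚ ↥(adjoin ℚ ({m} : Set ℂ)) = 8 ∧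
    Nonempty ((↥(adjoin ℚ ({m} : Set ℂ)) ≃ₐ[ℚ] ↥(adjoin ℚ ({m} : Set ℂ))) ≃*
      DihedralGroup 4) := by
  have hmp := qm_minpoly m hm
  have hdeg : (minpoly ℚ m).natDegree = 8 := by
    rw [hmp]
    have : (6 : Polynomial ℚ) = Polynomial.C 6 := rfl
    rw [this]; compute_degree!
  have hint : IsIntegral ℚ m := by
    by_contra h
    rw [minpoly.eq_zero h] at hdeg
    simp at hdeg
  have hfr : Module.finrank ℚ ↥(adjoin ℚ ({m} : Set ℂ)) = 8 := by
    rw [adjoin.finrank hint, hdeg]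
  let pb := adjoin.powerBasis hint
  have : FiniteDimensional ℚ ↥(adjoin ℚ ({m} : Set ℂ)) := pb.finite
  obtain ⟨t, ht⟩ : ∃ t, t = pb.gen := ⟨_, rfl⟩
  have hmt : minpoly ℚ t = Polynomial.X ^ 8 + 6 * Polynomial.X ^ 4 + 1 := by
    rw [ht, ← hmp]
    simp only [pb, adjoin.powerBasis_gen]
    exact minpoly_gen ℚ m
  have ht8 : t ^ 8 + 6 * t ^ 4 + 1 = 0 := by
    have := minpoly.aeval ℚ t
    rw [hmt] at this
    simpa only [map_add, map_mul, map_pow, map_one, Polynomial.aeval_X, map_ofNat] using this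
  have ht0 : t ≠ 0 := by
    rintro rfl; simp at ht8
  have hex : ∀ y : ↥(adjoin ℚ ({m} : Set ℂ)), y ^ 8 + 6 * y ^ 4 + 1 = 0 →
      ∃ σ : ↥(adjoin ℚ ({m} : Set ℂ)) ≃ₐ[ℚ] ↥(adjoin ℚ ({m} : Set ℂ)), σ t = y := by
    intro y hy
    have hy' : Polynomial.aeval y (minpoly ℚ pb.gen) = 0 := by
      rw [← ht, hmt]
      simpa only [map_add, map_mul, map_pow, map_one, Polynomial.aeval_X, map_ofNat] using hy
    refine ⟨AlgEquiv.ofBijective (pb.lift y hy') (AlgHom.bijective _), ?_⟩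
    rw [ht]
    exact pb.lift_gen y hy'
  have hext : ∀ σ τ : ↥(adjoin ℚ ({m} : Set ℂ)) ≃ₐ[ℚ] ↥(adjoin ℚ ({m} : Set ℂ)),
      σ t = τ t → σ = τ := by
    intro σ τ h
    rw [ht] at h
    have : σ.toAlgHom = τ.toAlgHom := pb.algHom_ext h
    ext1 x
    exact DFunLike.congr_fun this x
  clear_value pb
  obtain ⟨I, hId⟩ : ∃ I, I = t ^ 2 * (t ^ 4 + 5) / 2 := ⟨_, rfl⟩
  have hI : I ^ 2 = -1 := by
    rw [hId]; linear_combination (t ^ 4 + 4) / 4 * ht8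
  have hI4 : I ^ 4 = 1 := by linear_combination (I ^ 2 - 1) * hI
  obtain ⟨y, hy⟩ : ∃ y, y = t * (t ^ 4 + 5) / 2 := ⟨_, rfl⟩
  obtain ⟨z, hz⟩ : ∃ z, z = -(t ^ 7 + 6 * t ^ 3) := ⟨_, rfl⟩
  have hyt : y * t = I := by rw [hy, hId]; ring
  have hzt : z * t = 1 := by rw [hz]; linear_combination -ht8
  have hyt4 : y ^ 4 * t ^ 4 = 1 := by rw [← mul_pow, hyt, hI4]
  have hzt4 : z ^ 4 * t ^ 4 = 1 := by rw [← mul_pow, hzt, one_pow]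
  have hy4 : y ^ 4 = -t ^ 4 - 6 := by
    apply mul_right_cancel₀ (pow_ne_zero 4 ht0); linear_combination hyt4 + ht8
  have hz4 : z ^ 4 = -t ^ 4 - 6 := by
    apply mul_right_cancel₀ (pow_ne_zero 4 ht0); linear_combination hzt4 + ht8
  obtain ⟨ρ, hρ⟩ := hex y (by linear_combination (y ^ 4 - t ^ 4) * hy4 + ht8)
  obtain ⟨s, hs⟩ := hex z (by linear_combination (z ^ 4 - t ^ 4) * hz4 + ht8)
  have hρ2 : ρ (ρ t) = -t := by
    rw [hρ]; nth_rewrite 1 [hy]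
    simp only [map_mul, map_div₀, map_add, map_pow, map_ofNat, hρ]
    rw [hy4, hy]
    linear_combination -t / 4 * ht8
  have hst : s (s t) = t := by
    have h := congrArg s hzt
    simp only [map_mul, map_one, hs] at h
    rw [hs]
    have hz0 : z ≠ 0 := left_ne_zero_of_mul_eq_one hzt
    apply mul_right_cancel₀ hz0
    linear_combination h - hzt
  have hsρ : s (ρ t) = I * t := by
    rw [hρ, hy]
    simp only [map_mul, map_div₀, map_add, map_pow, map_ofNat, hs]
    rw [hz4, hz, hId]
    linear_combination t ^ 3 / 2 * ht8
  have hsρI : s (ρ I) = -I := by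
    rw [hId]
    simp only [map_mul, map_div₀, map_add, map_pow, map_ofNat, hsρ]
    rw [mul_pow, mul_pow, hI, hI4]; ring
  obtain ⟨φ, hφ⟩ := qm_dihedral ρ s
    (by
      apply hext
      simp only [pow_succ, pow_zero, one_mul, AlgEquiv.mul_apply, AlgEquiv.one_apply]
      rw [hρ2, map_neg, map_neg, hρ2, neg_neg])
    (by
      intro h
      have := DFunLike.congr_fun h t
      simp only [pow_succ, pow_zero, one_mul, AlgEquiv.mul_apply, AlgEquiv.one_apply] at this
      rw [hρ2] at this
      exact ht0 (self_eq_neg.1 this.symm))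
    (by apply hext; simpa using hst)
    (by
      apply hext
      simp only [AlgEquiv.mul_apply, AlgEquiv.one_apply]
      rw [hsρ, map_mul, map_mul, hsρI, hsρ]
      linear_combination -t * hI)
  have hcD : Nat.card (DihedralGroup 4) = 8 := by rw [DihedralGroup.nat_card]
  have hle := Nat.card_le_card_of_injective φ hφ
  have hge := AlgEquiv.card_le (K := ↥(adjoin ℚ ({m} : Set ℂ))) (F := ℚ)
  rw [← Nat.card_eq_fintype_card, hfr] at hge
  have hcard : Nat.card (↥(adjoin ℚ ({m} : Set ℂ)) ≃ₐ[ℚ] ↥(adjoin ℚ ({m} : Set ℂ))) = 8 := by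
    omega
  refine ⟨IsGalois.of_card_aut_eq_finrank _ _ (by rw [hcard, hfr]), hfr, ⟨?_⟩⟩
  have hbij : Function.Bijective φ :=
    (Nat.bijective_iff_injective_and_card φ).2 ⟨hφ, by rw [hcD, hcard]⟩
  exact (MulEquiv.ofBijective φ hbij).symm
end

section
/- Let n = √(1+√2) ∈ ℝ. Then ℚ(i, n) is a Galois extension of ℚ of degree 8 whose Galois group is isomorphic to the dihedral group D₈ of order 8. -/
open IntermediateField

open Polynomial in
/-- Auxiliary: Eisenstein polynomial. -/
noncomputable def qPoly : ℚ[X] := X ^ 4 + 4 * X ^ 3 + 4 * X ^ 2 - 2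

def dihAct : DihedralGroup 4 → Equiv.Perm (ZMod 4)
  | .r i => Equiv.addLeft i
  | .sr i => Equiv.subLeft (-i)

theorem dihAct_r (i x : ZMod 4) : dihAct (.r i) x = i + x := rfl
theorem dihAct_sr (i x : ZMod 4) : dihAct (.sr i) x = -i - x := rfl

def dihPerm : DihedralGroup 4 →* Equiv.Perm (ZMod 4) where
  toFun := dihAct
  map_one' := by
    apply Equiv.ext
    intro x
    rw [DihedralGroup.one_def, dihAct_r]; simp
  map_mul' := by
    rintro (a | a) (b | b) <;> apply Equiv.ext <;> intro x <;>
      simp only [DihedralGroup.r_mul_r, DihedralGroup.r_mul_sr, DihedralGroup.sr_mul_r,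
        DihedralGroup.sr_mul_sr, Equiv.Perm.mul_apply, dihAct_r, dihAct_sr] <;> ring

theorem dihPerm_inj : Function.Injective dihPerm := by
  rw [injective_iff_map_eq_one]
  rintro (a | a) h
  · have h0 : a + 0 = 0 := Equiv.Perm.ext_iff.1 h 0
    rw [add_zero] at h0
    subst h0; rfl
  · exfalso
    have h0 : -a - 0 = 0 := Equiv.Perm.ext_iff.1 h 0
    have h1 : -a - 1 = 1 := Equiv.Perm.ext_iff.1 h 1
    revert a; decide

theorem sylow_iso {G : Type*} [Group G] (hG : Nat.card G = 8) (f : G →* Equiv.Perm (ZMod 4))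
    (hf : Function.Injective f) : Nonempty (G ≃* DihedralGroup 4) := by
  have hc : 2 ^ (Nat.card (Equiv.Perm (ZMod 4))).factorization 2 = 8 := by
    have : Nat.card (Equiv.Perm (ZMod 4)) = 24 := by
      simp [Nat.card_eq_fintype_card, Fintype.card_perm, Nat.factorial]
    rw [this]
    have : (24:ℕ).factorization 2 = 3 := by
      rw [show 24 = 2^3*3 by norm_num, Nat.factorization_mul (by norm_num) (by norm_num),
        Nat.Prime.factorization_pow Nat.prime_two]
      simp [Nat.factorization_eq_zero_of_not_dvd]
    rw [this]; norm_num
  have e1 := MonoidHom.ofInjective hf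
  have e2 := MonoidHom.ofInjective dihPerm_inj
  have c1 : Nat.card f.range = 2 ^ (Nat.card (Equiv.Perm (ZMod 4))).factorization 2 := by
    rw [hc, ← hG]; exact (Nat.card_congr e1.toEquiv).symm
  have c2 : Nat.card dihPerm.range = 2 ^ (Nat.card (Equiv.Perm (ZMod 4))).factorization 2 := by
    rw [hc, ← Nat.card_congr e2.toEquiv, DihedralGroup.nat_card]
  exact ⟨e1.trans (((Sylow.ofCard _ c1).equiv (Sylow.ofCard _ c2)).trans e2.symm)⟩

section
open Polynomial

theorem qPoly_natDegree : qPoly.natDegree = 4 := by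
  unfold qPoly; compute_degree!

theorem qPoly_monic : qPoly.Monic := by
  unfold qPoly; monicity!

theorem qPoly_irr : Irreducible qPoly := by
  let p : ℤ[X] := X ^ 4 + 4 * X ^ 3 + 4 * X ^ 2 - 2
  have hm : p.Monic := by unfold p; monicity!
  have hd : p.natDegree = 4 := by unfold p; compute_degree!
  have hmap : p.map (Int.castRingHom ℚ) = qPoly := by
    simp [p, qPoly]
  rw [← hmap, ← IsPrimitive.Int.irreducible_iff_irreducible_map_cast hm.isPrimitive]
  have hp : p = X ^ 4 + C 4 * X ^ 3 + C 4 * X ^ 2 - C 2 := rfl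
  have hP : (Ideal.span {(2:ℤ)}).IsPrime := by
    rw [Ideal.span_singleton_prime (by norm_num)]; exact Int.prime_two
  refine irreducible_of_eisenstein_criterion hP ?_ ?_ ?_ ?_ hm.isPrimitive
  · rw [hm.leadingCoeff, Ideal.mem_span_singleton]; decide
  · intro k hk
    rw [degree_eq_natDegree hm.ne_zero, hd] at hk
    have hk : k < 4 := by exact_mod_cast hk
    rw [Ideal.mem_span_singleton, hp]
    interval_cases k <;> simp [coeff_X_pow, coeff_C] <;> norm_num
  · rw [degree_eq_natDegree hm.ne_zero, hd]; norm_num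
  · rw [Ideal.span_singleton_pow, Ideal.mem_span_singleton, hp]
    simp [coeff_X_pow]

theorem qPoly_root (x : ℂ) : x ∈ qPoly.rootSet ℂ ↔ (x + 1) ^ 4 - 2 * (x + 1) ^ 2 - 1 = 0 := by
  rw [mem_rootSet_of_ne qPoly_monic.ne_zero]
  have : aeval x qPoly = (x + 1) ^ 4 - 2 * (x + 1) ^ 2 - 1 := by
    simp only [qPoly, map_sub, map_add, map_mul, map_pow, aeval_X, map_ofNat]; ring
  rw [this]

theorem n_eq {n : ℂ} (hn : n = Real.sqrt (1 + Real.sqrt 2)) : n ^ 4 - 2 * n ^ 2 - 1 = 0 := by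
  have h1 : (Real.sqrt (1 + Real.sqrt 2)) ^ 2 = 1 + Real.sqrt 2 := Real.sq_sqrt (by positivity)
  have h2 : (Real.sqrt 2) ^ 2 = 2 := Real.sq_sqrt (by positivity)
  have h3 : (Real.sqrt (1 + Real.sqrt 2)) ^ 4 - 2 * (Real.sqrt (1 + Real.sqrt 2)) ^ 2 - 1 = 0 := by
    rw [show ∀ x : ℝ, x ^ 4 = (x ^ 2) ^ 2 by intro x; ring, h1]
    linear_combination h2
  rw [hn]; exact_mod_cast h3

theorem adjoin_eq {n : ℂ} (h : n ^ 4 - 2 * n ^ 2 - 1 = 0) :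
    adjoin ℚ ({Complex.I, n} : Set ℂ) = adjoin ℚ (qPoly.rootSet ℂ) := by
  have n0 : n ≠ 0 := by rintro rfl; norm_num at h
  have I2 := Complex.I_sq
  apply le_antisymm
  · have hn : n - 1 ∈ adjoin ℚ (qPoly.rootSet ℂ) := subset_adjoin _ _ (by
      rw [qPoly_root]; linear_combination h)
    have hI : Complex.I / n - 1 ∈ adjoin ℚ (qPoly.rootSet ℂ) := subset_adjoin _ _ (by
      rw [qPoly_root]; field_simp
      ring_nf
      rw [show Complex.I ^ 4 = 1 by rw [show Complex.I ^ 4 = (Complex.I^2)^2 by ring, I2]; norm_num,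
        I2]
      linear_combination -h)
    have hn' : n ∈ adjoin ℚ (qPoly.rootSet ℂ) := by simpa using add_mem hn (one_mem _)
    have hI' : Complex.I ∈ adjoin ℚ (qPoly.rootSet ℂ) := by
      have := mul_mem (add_mem hI (one_mem _)) hn'
      rwa [sub_add_cancel, div_mul_cancel₀ _ n0] at this
    rw [adjoin_le_iff]
    rintro x (rfl | rfl) <;> assumption
  · rw [adjoin_le_iff]
    intro x hx
    rw [qPoly_root] at hx
    have hI : Complex.I ∈ adjoin ℚ ({Complex.I, n} : Set ℂ) := subset_adjoin _ _ (by simp)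
    have hn : n ∈ adjoin ℚ ({Complex.I, n} : Set ℂ) := subset_adjoin _ _ (by simp)
    have key : (x + 1 - n) * ((x + 1 + n) * (((x + 1) * n - Complex.I) *
        ((x + 1) * n + Complex.I))) = 0 := by
      linear_combination n ^ 2 * hx + (-(x + 1) ^ 2) * h + (n ^ 2 - (x+1) ^ 2) * I2
    have hy : x + 1 ∈ adjoin ℚ ({Complex.I, n} : Set ℂ) := by
      rcases mul_eq_zero.1 key with h1 | h1
      · rwa [show x + 1 = n by linear_combination h1]
      rcases mul_eq_zero.1 h1 with h1 | h1
      · rw [show x + 1 = -n by linear_combination h1]; exact neg_mem hn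
      rcases mul_eq_zero.1 h1 with h1 | h1
      · rw [show x + 1 = Complex.I / n by field_simp; linear_combination h1]
        exact div_mem hI hn
      · rw [show x + 1 = -(Complex.I / n) by field_simp; linear_combination h1]
        exact neg_mem (div_mem hI hn)
    have := sub_mem hy (one_mem _)
    simpa using this

theorem finrank_eq {n : ℂ} (hn : n = Real.sqrt (1 + Real.sqrt 2)) :
    Module.finrank ℚ ↥(adjoin ℚ ({Complex.I, n} : Set ℂ)) = 8 := by
  have h := n_eq hn
  have hroot : aeval (n - 1) qPoly = 0 := by
    have : n - 1 ∈ qPoly.rootSet ℂ := by rw [qPoly_root]; linear_combination h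
    exact ((mem_rootSet_of_ne qPoly_monic.ne_zero).1 this)
  have hint : IsIntegral ℚ (n - 1) := ⟨qPoly, qPoly_monic, hroot⟩
  let F : IntermediateField ℚ ℂ := adjoin ℚ {n - 1}
  have hF : Module.finrank ℚ F = 4 := by
    rw [adjoin.finrank hint, ← minpoly.eq_of_irreducible_of_monic qPoly_irr hroot qPoly_monic,
      qPoly_natDegree]
  have hreal : ∀ x ∈ F, x.im = 0 := by
    have : F ≤ (⊥ : IntermediateField ℝ ℂ).restrictScalars ℚ := by
      rw [adjoin_le_iff]
      rintro x rfl
      show n - 1 ∈ (⊥ : IntermediateField ℝ ℂ)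
      rw [mem_bot]
      exact ⟨Real.sqrt (1 + Real.sqrt 2) - 1, by rw [hn]; simp⟩
    intro x hx
    have := this hx
    obtain ⟨y, rfl⟩ := mem_bot.1 (show x ∈ (⊥ : IntermediateField ℝ ℂ) from this)
    simp
  have hmon : (X ^ 2 + 1 : F[X]).Monic := by monicity!
  have hdeg : (X ^ 2 + 1 : F[X]).natDegree = 2 := by compute_degree!
  have hIroot : aeval Complex.I (X ^ 2 + 1 : F[X]) = 0 := by simp
  have hirr : Irreducible (X ^ 2 + 1 : F[X]) := by
    rw [hmon.irreducible_iff_roots_eq_zero_of_degree_le_three (by omega) (by omega)]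
    rw [Multiset.eq_zero_iff_forall_notMem]
    intro a ha
    have ha := isRoot_of_mem_roots ha
    have e : a ^ 2 + 1 = 0 := by simpa using ha
    have e2 : (a : ℂ) ^ 2 + 1 = 0 := by exact_mod_cast congrArg (Subtype.val) e
    have e3 := congrArg Complex.re e2
    have e4 := hreal a a.2
    simp [pow_two, e4] at e3
    nlinarith [mul_self_nonneg (a : ℂ).re]
  have hE : Module.finrank F (adjoin F {Complex.I}) = 2 := by
    rw [adjoin.finrank ⟨_, hmon, hIroot⟩,
      ← minpoly.eq_of_irreducible_of_monic hirr hIroot hmon, hdeg]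
  have hK : adjoin ℚ ({Complex.I, n} : Set ℂ) = (adjoin F {Complex.I}).restrictScalars ℚ := by
    rw [show (adjoin F {Complex.I}).restrictScalars ℚ = _ from adjoin_adjoin_left ℚ {n - 1} {Complex.I}]
    apply le_antisymm
    · rw [adjoin_le_iff]
      have h1 : n - 1 ∈ adjoin ℚ ({n - 1} ∪ {Complex.I} : Set ℂ) := subset_adjoin _ _ (by simp)
      rintro x (rfl | rfl)
      · exact subset_adjoin _ _ (by simp)
      · simpa using add_mem h1 (one_mem _)
    · rw [adjoin_le_iff]
      have h1 : n ∈ adjoin ℚ ({Complex.I, n} : Set ℂ) := subset_adjoin _ _ (by simp)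
      rintro x (rfl | rfl)
      · exact sub_mem h1 (one_mem _)
      · exact subset_adjoin _ _ (by simp)
  rw [hK]
  have := Module.finrank_mul_finrank ℚ F (adjoin F {Complex.I})
  rw [hF, hE] at this
  exact this.symm

end

/-- Let `n = √(1+√2) ∈ ℝ`. Then `ℚ(i, n)/ℚ` is a Galois extension of degree 8 whose
Galois group is isomorphic to the dihedral group `D₈` of order 8. -/
theorem galois_group_Qin (n : ℂ) (hn : n = Real.sqrt (1 + Real.sqrt 2)) :
    IsGalois ℚ ↥(adjoin ℚ ({Complex.I, n} : Set ℂ)) ∧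
    Module.finrank ℚ ↥(adjoin ℚ ({Complex.I, n} : Set ℂ)) = 8 ∧
    Nonempty ((↥(adjoin ℚ ({Complex.I, n} : Set ℂ)) ≃ₐ[ℚ]
        ↥(adjoin ℚ ({Complex.I, n} : Set ℂ))) ≃* DihedralGroup 4) := by
  have hfin := finrank_eq hn
  have hs : (qPoly.map (algebraMap ℚ ℂ)).Splits := IsAlgClosed.splits _
  have hsplit : qPoly.IsSplittingField ℚ ↥(adjoin ℚ ({Complex.I, n} : Set ℂ)) := by
    rw [adjoin_eq (n_eq hn)]
    exact adjoin_rootSet_isSplittingField hs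
  have hgal : IsGalois ℚ ↥(adjoin ℚ ({Complex.I, n} : Set ℂ)) :=
    IsGalois.of_separable_splitting_field qPoly_irr.separable
  refine ⟨hgal, hfin, ?_⟩
  have hfd : FiniteDimensional ℚ ↥(adjoin ℚ ({Complex.I, n} : Set ℂ)) :=
    Module.finite_of_finrank_pos (by omega)
  have hcard := IsGalois.card_aut_eq_finrank ℚ ↥(adjoin ℚ ({Complex.I, n} : Set ℂ))
  rw [hfin] at hcard
  have e : (↥(adjoin ℚ ({Complex.I, n} : Set ℂ)) ≃ₐ[ℚ] ↥(adjoin ℚ ({Complex.I, n} : Set ℂ))) ≃*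
      qPoly.Gal := AlgEquiv.autCongr (Polynomial.IsSplittingField.algEquiv _ qPoly)
  haveI : Fact ((qPoly.map (algebraMap ℚ ℂ)).Splits) := ⟨hs⟩
  have hr : Fintype.card (qPoly.rootSet ℂ) = Fintype.card (ZMod 4) := by
    rw [Polynomial.card_rootSet_eq_natDegree qPoly_irr.separable hs, qPoly_natDegree, ZMod.card]
  have e2 := (Fintype.equivOfCardEq hr).permCongrHom
  refine sylow_iso hcard (e2.toMonoidHom.comp
    ((Polynomial.Gal.galActionHom qPoly ℂ).comp e.toMonoidHom)) ?_
  exact e2.injective.comp ((Polynomial.Gal.galActionHom_injective qPoly ℂ).comp e.injective)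
end

section
/- Every (a,b,c) ∈ ℂ³ satisfying 4 + 3a⁴ + 8a³b + 8a²b² − 4a³c − 8a²bc = 0 and a⁴ − 8a²b² − 16ab³ − 8b⁴ + 8a²bc + 24ab²c + 16b³c − 2a²c² − 8abc² − 8b²c² = 0 also satisfies a⁸ + 24a⁴ + 16 = 0 and 16(a+2b)c = 32ab + 32b² − 12a² − a⁶. -/
/-- Family 1 solutions of (E1): if `f₁ = 0` and `g = 0` then
`a⁸ + 24a⁴ + 16 = 0` and `16(a+2b)c = 32ab + 32b² − 12a² − a⁶`. -/
theorem family1_relations (a b c : ℂ)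
    (hf1 : 4 + 3*a^4 + 8*a^3*b + 8*a^2*b^2 - 4*a^3*c - 8*a^2*b*c = 0)
    (hg : a^4 - 8*a^2*b^2 - 16*a*b^3 - 8*b^4 + 8*a^2*b*c + 24*a*b^2*c + 16*b^3*c
      - 2*a^2*c^2 - 8*a*b*c^2 - 8*b^2*c^2 = 0) :
    a^8 + 24*a^4 + 16 = 0 ∧ 16*(a + 2*b)*c = 32*a*b + 32*b^2 - 12*a^2 - a^6 := by
  have h8 : a^8 + 24*a^4 + 16 = 0 := by
    linear_combination (4 + 3*a^4 + 4*a^2*((a + 2*b)*c - 2*b*(a+b))) * hf1 - 8*a^4 * hg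
  refine ⟨h8, ?_⟩
  have ha : a ≠ 0 := by
    rintro rfl
    norm_num at h8
  have ha2 : a^2 ≠ 0 := pow_ne_zero 2 ha
  apply mul_left_cancel₀ ha2
  linear_combination h8 - 4 * hf1
end

section
/- Let (a,b,c) ∈ ℂ³ satisfy −4 + 3a⁴ + 8a³b + 8a²b² − 4a³c − 8a²bc = 0 and a⁴ − 8a²b² − 16ab³ − 8b⁴ + 8a²bc + 24ab²c + 16b³c − 2a²c² − 8abc² − 8b²c² = 0. If a⁴ − 4a² − 4 = 0 then 2(a+2b)c = (a+2b)² + 2, and if a⁴ + 4a² − 4 = 0 then 2(a+2b)c = (a+2b)² − 2. -/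
/-- Family 2 solutions of (E1): if `f₂ = 0` and `g = 0`, then for Family 2A
(`a⁴ − 4a² − 4 = 0`) one has `2(a+2b)c = (a+2b)² + 2`, and for Family 2B
(`a⁴ + 4a² − 4 = 0`) one has `2(a+2b)c = (a+2b)² − 2`. -/
theorem family2_relations (a b c : ℂ)
    (hf2 : -4 + 3*a^4 + 8*a^3*b + 8*a^2*b^2 - 4*a^3*c - 8*a^2*b*c = 0)
    (hg : a^4 - 8*a^2*b^2 - 16*a*b^3 - 8*b^4 + 8*a^2*b*c + 24*a*b^2*c + 16*b^3*c
      - 2*a^2*c^2 - 8*a*b*c^2 - 8*b^2*c^2 = 0) :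
    (a^4 - 4*a^2 - 4 = 0 → 2*(a + 2*b)*c = (a + 2*b)^2 + 2) ∧
    (a^4 + 4*a^2 - 4 = 0 → 2*(a + 2*b)*c = (a + 2*b)^2 - 2) := by
  have key : ∀ x : ℂ, a ^ 2 * x = 0 → a ≠ 0 → x = 0 := fun x h h0 =>
    (mul_eq_zero.mp h).resolve_left (pow_ne_zero 2 h0)
  constructor
  · intro h
    have h0 : a ≠ 0 := by
      rintro rfl
      norm_num at h
    have := key (2*(a + 2*b)*c - ((a + 2*b)^2 + 2)) (by linear_combination (-1/2) * hf2 + (1/2) * h) h0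
    linear_combination this
  · intro h
    have h0 : a ≠ 0 := by
      rintro rfl
      norm_num at h
    have := key (2*(a + 2*b)*c - ((a + 2*b)^2 - 2)) (by linear_combination (-1/2) * hf2 + (1/2) * h) h0
    linear_combination this
end

section
/- The set of triples (a,b,c) ∈ ℂ³ satisfying the equations (E1): −(1/64)·(−4 + 3a⁴ + 8a³b + 8a²b² − 4a³c − 8a²bc)·(4 + 3a⁴ + 8a³b + 8a²b² − 4a³c − 8a²bc) = 0 and −(1/8)·a²·(a⁴ − 8a²b² − 16ab³ − 8b⁴ + 8a²bc + 24ab²c + 16b³c − 2a²c² − 8abc² − 8b²c²) = 0 is infinite. -/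
/-- The set of solutions `(a,b,c) ∈ ℂ³` of the equations (E1) is infinite. -/
theorem solutions_E1_infinite :
    {p : ℂ × ℂ × ℂ |
      -(1/64) * (-4 + 3*p.1^4 + 8*p.1^3*p.2.1 + 8*p.1^2*p.2.1^2 - 4*p.1^3*p.2.2
          - 8*p.1^2*p.2.1*p.2.2) *
        (4 + 3*p.1^4 + 8*p.1^3*p.2.1 + 8*p.1^2*p.2.1^2 - 4*p.1^3*p.2.2
          - 8*p.1^2*p.2.1*p.2.2) = 0 ∧
      -(1/8) * p.1^2 * (p.1^4 - 8*p.1^2*p.2.1^2 - 16*p.1*p.2.1^3 - 8*p.2.1^4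
        + 8*p.1^2*p.2.1*p.2.2 + 24*p.1*p.2.1^2*p.2.2 + 16*p.2.1^3*p.2.2
        - 2*p.1^2*p.2.2^2 - 8*p.1*p.2.1*p.2.2^2 - 8*p.2.1^2*p.2.2^2) = 0}.Infinite := by
  obtain ⟨s, hs0, hs⟩ : ∃ s : ℝ, 0 ≤ s ∧ s ^ 2 = 2 :=
    ⟨Real.sqrt 2, Real.sqrt_nonneg _, Real.sq_sqrt (by norm_num)⟩
  obtain ⟨a, ha0, ha⟩ : ∃ a : ℝ, 0 < a ∧ a ^ 2 = 2 + 2 * s :=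
    ⟨Real.sqrt (2 + 2 * s), Real.sqrt_pos.2 (by positivity), Real.sq_sqrt (by positivity)⟩
  have hs' : (s : ℂ) ^ 2 = 2 := by exact_mod_cast hs
  have ha' : (a : ℂ) ^ 2 = 2 + 2 * s := by exact_mod_cast ha
  have ha4 : (a : ℂ) ^ 4 = 12 + 8 * s := by
    linear_combination ((a : ℂ) ^ 2 + 2 + 2 * s) * ha' + 4 * hs'
  refine Set.infinite_of_injective_forall_mem (f := fun n : ℕ =>
    ((a : ℂ), (n : ℂ), (2 * (n : ℂ) * (a + n) + s + 2) / ((a : ℂ) + 2 * n))) ?_ ?_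
  · intro m n h
    simpa using congrArg (fun p : ℂ × ℂ × ℂ => p.2.1) h
  · intro n
    have hne : (a : ℂ) + 2 * n ≠ 0 := by
      have : a + 2 * (n : ℝ) ≠ 0 := by positivity
      exact_mod_cast this
    have hc := div_mul_cancel₀ (2 * (n : ℂ) * (a + n) + s + 2) hne
    simp only [Set.mem_setOf_eq]
    generalize (2 * (n : ℂ) * (a + n) + s + 2) / ((a : ℂ) + 2 * n) = c at hc ⊢
    generalize (n : ℂ) = b at hc ⊢
    generalize (a : ℂ) = a at *
    generalize (s : ℂ) = s at *
    have h1 : -4 + 3*a^4 + 8*a^3*b + 8*a^2*b^2 - 4*a^3*c - 8*a^2*b*c = 0 := by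
      linear_combination 3 * ha4 - 4 * a^2 * hc - 4 * (s + 2) * ha' - 8 * hs'
    have h2 : a^4 - 8*a^2*b^2 - 16*a*b^3 - 8*b^4
        + 8*a^2*b*c + 24*a*b^2*c + 16*b^3*c
        - 2*a^2*c^2 - 8*a*b*c^2 - 8*b^2*c^2 = 0 := by
      linear_combination ha4 - 2 * (c * (a + 2 * b) - 2 * b * (a + b) + s + 2) * hc - 2 * hs'
    exact ⟨by rw [h1]; ring, by rw [h2]; ring⟩
end

section
/- Suppose (a,b,c,d) ∈ ℂ⁴ with b ≠ 0 satisfies the equations (E2): a² = 1; b² + 4c/b − c² − 4cd + bc²d + 2bcd² = 0; −2 + 2bc + 2c²/b² − c⁴/4 + 2bd − 2c²d/b + c²d² = 0; −2/b² + 2d/b − d² = 0. Then, setting t = bd, one has t² − 2t + 2 = 0 (so t = 1 ± i), c ≠ 0, (b/c)² = 1 − t, the quotient β = b/c is a primitive 8th root of unity (i.e. β⁴ = −1), and c⁴ − 8βc² + 8β² = 0. -/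
open Complex in
/-- For any solution `(a,b,c,d)` of the equations (E2) with `b ≠ 0`, setting
`t = bd` one has `t² − 2t + 2 = 0` (so `t = 1 ± i`), `c ≠ 0`, `(b/c)² = 1 − t`,
`β = b/c` is a primitive 8th root of unity (i.e. `β⁴ = −1`), and
`c⁴ − 8βc² + 8β² = 0`. -/
theorem solutions_E2_structure (a b c d : ℂ) (hb : b ≠ 0)
    (h1 : a^2 = 1)
    (h2 : b^2 + 4*c/b - c^2 - 4*c*d + b*c^2*d + 2*b*c*d^2 = 0)
    (h3 : -2 + 2*b*c + 2*c^2/b^2 - c^4/4 + 2*b*d - 2*c^2*d/b + c^2*d^2 = 0)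
    (h4 : -2/b^2 + 2*d/b - d^2 = 0) :
    (b*d)^2 - 2*(b*d) + 2 = 0 ∧ (b*d = 1 + I ∨ b*d = 1 - I) ∧ c ≠ 0 ∧
    (b/c)^2 = 1 - b*d ∧ (b/c)^4 = -1 ∧
    c^4 - 8*(b/c)*c^2 + 8*(b/c)^2 = 0 := by
  have ht : (b*d)^2 - 2*(b*d) + 2 = 0 := by
    have e : (b*d)^2 - 2*(b*d) + 2 = -b^2 * (-2/b^2 + 2*d/b - d^2) := by
      field_simp
      ring
    rw [e, h4, mul_zero]
  have hbc : b^2 = c^2 * (1 - b*d) := by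
    have e : b^2 + 4*c/b - c^2 - 4*c*d + b*c^2*d + 2*b*c*d^2
        = b^2 - c^2 * (1 - b*d) + 2*c/b*((b*d)^2 - 2*(b*d) + 2) := by
      field_simp
      ring
    rw [e, ht] at h2
    linear_combination h2
  have hc4 : c^4 - 8*(b*c) + 8*(1 - b*d) = 0 := by
    have e : -2 + 2*b*c + 2*c^2/b^2 - c^4/4 + 2*b*d - 2*c^2*d/b + c^2*d^2
        = -2 + 2*b*c - c^4/4 + 2*b*d + c^2/b^2*((b*d)^2 - 2*(b*d) + 2) := by
      field_simp
      ring
    rw [e, ht] at h3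
    linear_combination (-4) * h3
  have hc : c ≠ 0 := by
    rintro rfl
    apply hb
    have : b^2 = 0 := by rw [hbc]; ring
    exact pow_eq_zero_iff (two_ne_zero) |>.mp this
  have hq : (b/c)^2 = 1 - b*d := by
    rw [div_pow, hbc]
    field_simp
  refine ⟨ht, ?_, hc, hq, ?_, ?_⟩
  · have : (b*d - (1 + I)) * (b*d - (1 - I)) = 0 := by
      linear_combination ht - I_sq
    rcases mul_eq_zero.mp this with h | h
    · exact Or.inl (sub_eq_zero.mp h)
    · exact Or.inr (sub_eq_zero.mp h)
  · linear_combination ((b/c)^2 + (1 - b*d)) * hq + ht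
  · have e : (b/c)*c^2 = b*c := by field_simp
    linear_combination hc4 - 8 * e + 8 * hq
end

section
/- Suppose (a,b,c,d) ∈ ℂ⁴ with b ≠ 0 satisfies the equations (E2): a² = 1; b² + 4c/b − c² − 4cd + bc²d + 2bcd² = 0; −2 + 2bc + 2c²/b² − c⁴/4 + 2bd − 2c²d/b + c²d² = 0; −2/b² + 2d/b − d² = 0. Then c is a root of the polynomial f(X) = X¹⁶ + 2176·X⁸ + 4096 (that is, X¹⁶ + 2⁷·17·X⁸ + 2¹²). -/
/-- For any solution `(a,b,c,d)` of the equations (E2) with `b ≠ 0`, the value `c`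
is a root of `f(X) = X¹⁶ + 2⁷·17·X⁸ + 2¹² = X¹⁶ + 2176·X⁸ + 4096`. -/
theorem c_root_of_f (a b c d : ℂ) (hb : b ≠ 0)
    (h1 : a^2 = 1)
    (h2 : b^2 + 4*c/b - c^2 - 4*c*d + b*c^2*d + 2*b*c*d^2 = 0)
    (h3 : -2 + 2*b*c + 2*c^2/b^2 - c^4/4 + 2*b*d - 2*c^2*d/b + c^2*d^2 = 0)
    (h4 : -2/b^2 + 2*d/b - d^2 = 0) :
    c^16 + 2176*c^8 + 4096 = 0 := by
  obtain ⟨j, hj⟩ : ∃ j, j = b*d - 1 := ⟨_, rfl⟩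
  have hd : d = (j+1)/b := by rw [hj]; field_simp; ring
  subst hd
  have e : j^2 = -1 := by
    have : -2/b^2 + 2*((j+1)/b)/b - ((j+1)/b)^2 = (-1 - j^2)/b^2 := by field_simp; ring
    rw [this, div_eq_zero_iff] at h4
    rcases h4 with h | h
    · linear_combination -h
    · exact absurd h (pow_ne_zero 2 hb)
  have f2 : b^2 = -j*c^2 := by
    have : b^2 + 4*c/b - c^2 - 4*c*((j+1)/b) + b*c^2*((j+1)/b) + 2*b*c*((j+1)/b)^2
      = b^2 + j*c^2 + 2*c/b*(j^2+1) := by field_simp; ring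
    linear_combination h2 - this - 2*c/b*e
  have f3 : 2*b*c = c^4/4 - 2*j := by
    have : -2 + 2*b*c + 2*c^2/b^2 - c^4/4 + 2*b*((j+1)/b) - 2*c^2*((j+1)/b)/b + c^2*((j+1)/b)^2
      = 2*b*c + 2*j - c^4/4 + c^2/b^2*(j^2+1) := by field_simp; ring
    linear_combination h3 - this - c^2/b^2*e
  have g : c^8 - 64 = -48*j*c^4 := by
    linear_combination (-16)*(2*b*c + (c^4/4-2*j))*f3 + 64*c^2*f2 - 64*e
  linear_combination (c^8-64-48*j*c^4)*g + 2304*c^8*e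
end

section
/- The set of quadruples (a,b,c,d) ∈ ℂ⁴ with b ≠ 0 satisfying the equations (E2): a² = 1; b² + 4c/b − c² − 4cd + bc²d + 2bcd² = 0; −2 + 2bc + 2c²/b² − c⁴/4 + 2bd − 2c²d/b + c²d² = 0; −2/b² + 2d/b − d² = 0, has exactly 32 elements. -/
open Polynomial in
theorem P_card_aux : ((X ^ 16 + C 2176 * X ^ 8 + C 4096 : ℂ[X])).roots.toFinset.card = 16 := by
  have hdeg : (X ^ 16 + C 2176 * X ^ 8 + C 4096 : ℂ[X]).natDegree = 16 := by compute_degree!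
  have hsep : (X ^ 16 + C 2176 * X ^ 8 + C 4096 : ℂ[X]).Separable := by
    refine ⟨C (1/4096) * (1 + C (17/18432) * X ^ 8),
      C (1/4096) * (C (-577/288) - C (17/18432) * X ^ 8) * C (1/16) * X, ?_⟩
    apply Polynomial.funext
    intro x
    simp
    ring
  rw [Multiset.toFinset_card_of_nodup (nodup_roots hsep),
    ← (IsAlgClosed.splits _).natDegree_eq_card_roots, hdeg]

theorem P_mem_aux (c : ℂ) :
    c ∈ ((Polynomial.X ^ 16 + Polynomial.C 2176 * Polynomial.X ^ 8 + Polynomial.C 4096 :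
      Polynomial ℂ)).roots.toFinset ↔ c ^ 16 + 2176 * c ^ 8 + 4096 = 0 := by
  have hdeg : (Polynomial.X ^ 16 + Polynomial.C 2176 * Polynomial.X ^ 8 + Polynomial.C 4096 :
      Polynomial ℂ).natDegree = 16 := by compute_degree!
  have h0 : (Polynomial.X ^ 16 + Polynomial.C 2176 * Polynomial.X ^ 8 + Polynomial.C 4096 :
      Polynomial ℂ) ≠ 0 := by
    intro h
    rw [h] at hdeg
    simp at hdeg
  rw [Multiset.mem_toFinset, Polynomial.mem_roots h0, Polynomial.IsRoot.def]
  simp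

noncomputable def jj (c : ℂ) : ℂ := -(c ^ 8 - 64) / (48 * c ^ 4)
noncomputable def bb (c : ℂ) : ℂ := (c ^ 4 / 8 - jj c) / c
noncomputable def FF (p : ℂ × ℂ) : ℂ × ℂ × ℂ × ℂ := (p.1, bb p.2, p.2, (1 + jj p.2) / bb p.2)

theorem sys_aux (b c d : ℂ) (hb : b ≠ 0) :
    (b^2 + 4*c/b - c^2 - 4*c*d + b*c^2*d + 2*b*c*d^2 = 0 ∧
      -2 + 2*b*c + 2*c^2/b^2 - c^4/4 + 2*b*d - 2*c^2*d/b + c^2*d^2 = 0 ∧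
      -2/b^2 + 2*d/b - d^2 = 0) ↔
    ∃ j, j ^ 2 = -1 ∧ d = (1 + j) / b ∧ b ^ 2 = -j * c ^ 2 ∧ b * c = c ^ 4 / 8 - j := by
  constructor
  · rintro ⟨h1, h2, h3⟩
    obtain ⟨j, rfl⟩ : ∃ j, d = (1 + j) / b := ⟨b * d - 1, by field_simp; ring⟩
    have hj : j ^ 2 = -1 := by
      field_simp at h3
      linear_combination -h3
    refine ⟨j, hj, rfl, ?_, ?_⟩
    · field_simp at h1
      have : b * (b ^ 2 + j * c ^ 2) = 0 := by linear_combination h1 - 2 * c * hj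
      rcases mul_eq_zero.1 this with h | h
      · exact absurd h hb
      · linear_combination h
    · field_simp at h2
      have : b ^ 2 * (b * c - (c ^ 4 / 8 - j)) = 0 := by
        linear_combination h2 / 8 - c ^ 2 / 2 * hj
      rcases mul_eq_zero.1 this with h | h
      · exact absurd h (pow_ne_zero _ hb)
      · linear_combination h
  · rintro ⟨j, hj, rfl, h1, h2⟩
    refine ⟨?_, ?_, ?_⟩
    · field_simp
      linear_combination b * h1 + 2 * c * hj
    · field_simp
      linear_combination 8 * b ^ 2 * h2 + 4 * c ^ 2 * hj
    · field_simp
      linear_combination - hj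

theorem par_aux (b c d : ℂ) :
    (b ≠ 0 ∧ ∃ j, j ^ 2 = -1 ∧ d = (1 + j) / b ∧ b ^ 2 = -j * c ^ 2 ∧ b * c = c ^ 4 / 8 - j) ↔
    (c ^ 16 + 2176 * c ^ 8 + 4096 = 0 ∧ b = bb c ∧ d = (1 + jj c) / bb c) := by
  constructor
  · rintro ⟨hb, j, hj, hd, h1, h2⟩
    have hc : c ≠ 0 := by
      rintro rfl
      apply hb
      simpa using h1
    have h3 : c ^ 8 + 48 * j * c ^ 4 - 64 = 0 := by
      have : (c ^ 4 / 8 - j) ^ 2 = - j * c ^ 4 := by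
        rw [← h2]
        linear_combination c ^ 2 * h1
      linear_combination 64 * this - 64 * hj
    have hjj : jj c = j := by
      unfold jj
      field_simp
      linear_combination -h3
    have hbb : bb c = b := by
      unfold bb
      rw [hjj]
      field_simp
      linear_combination -8 * h2
    refine ⟨?_, hbb.symm, by rw [hbb, hjj, hd]⟩
    linear_combination (c ^ 8 - 48 * j * c ^ 4 - 64) * h3 + 2304 * c ^ 8 * hj
  · rintro ⟨hP, rfl, rfl⟩
    have hc : c ≠ 0 := by
      rintro rfl
      norm_num at hP
    have hj : jj c ^ 2 = -1 := by
      unfold jj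
      field_simp
      linear_combination hP
    have h3 : c ^ 8 + 48 * jj c * c ^ 4 - 64 = 0 := by
      unfold jj
      field_simp
      ring
    have h2 : bb c * c = c ^ 4 / 8 - jj c := by
      unfold bb
      field_simp
    have h1 : bb c ^ 2 = -jj c * c ^ 2 := by
      have : c ^ 2 * (bb c ^ 2 + jj c * c ^ 2) = 0 := by
        linear_combination (bb c * c + c ^ 4 / 8 - jj c) * h2 + h3 / 64 + hj
      rcases mul_eq_zero.1 this with h | h
      · exact absurd h (pow_ne_zero _ hc)
      · linear_combination h
    refine ⟨?_, jj c, hj, rfl, h1, h2⟩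
    intro h0
    rw [h0] at h1
    have : jj c = 0 ∨ c = 0 := by simpa using h1
    rcases this with h | h
    · rw [h] at hj
      norm_num at hj
    · exact hc h

/-- The equations (E2) admit precisely 32 solutions `(a,b,c,d) ∈ ℂ⁴` with `b ≠ 0`. -/
theorem solutions_E2_card :
    Set.ncard {p : ℂ × ℂ × ℂ × ℂ | p.2.1 ≠ 0 ∧
      p.1^2 = 1 ∧
      p.2.1^2 + 4*p.2.2.1/p.2.1 - p.2.2.1^2 - 4*p.2.2.1*p.2.2.2
        + p.2.1*p.2.2.1^2*p.2.2.2 + 2*p.2.1*p.2.2.1*p.2.2.2^2 = 0 ∧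
      -2 + 2*p.2.1*p.2.2.1 + 2*p.2.2.1^2/p.2.1^2 - p.2.2.1^4/4 + 2*p.2.1*p.2.2.2
        - 2*p.2.2.1^2*p.2.2.2/p.2.1 + p.2.2.1^2*p.2.2.2^2 = 0 ∧
      -2/p.2.1^2 + 2*p.2.2.2/p.2.1 - p.2.2.2^2 = 0} = 32 := by
  classical
  have key : ∀ S : Set (ℂ × ℂ × ℂ × ℂ), S = ((({1, -1} : Finset ℂ) ×ˢ
      ((Polynomial.X ^ 16 + Polynomial.C 2176 * Polynomial.X ^ 8 + Polynomial.C 4096 :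
      Polynomial ℂ)).roots.toFinset).image FF : Finset _) → S.ncard = 32 := by
    rintro S rfl
    rw [Set.ncard_coe_finset, Finset.card_image_of_injective, Finset.card_product, P_card_aux,
      Finset.card_pair (by norm_num)]
    rintro ⟨a, c⟩ ⟨a', c'⟩ h
    simp only [FF, Prod.mk.injEq] at h
    rw [h.1, h.2.2.1]
  apply key
  ext ⟨a, b, c, d⟩
  simp only [Set.mem_setOf_eq, Finset.mem_coe, Finset.mem_image, Finset.mem_product, P_mem_aux,
    Finset.mem_insert, Finset.mem_singleton, FF, Prod.exists, Prod.mk.injEq]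
  constructor
  · rintro ⟨hb, ha, h⟩
    obtain ⟨hP, h1, h2⟩ := (par_aux b c d).1 ⟨hb, (sys_aux b c d hb).1 h⟩
    exact ⟨a, c, ⟨by simpa using ha, hP⟩, rfl, h1.symm, rfl, h2.symm⟩
  · rintro ⟨a', c', ⟨ha, hP⟩, rfl, h1, rfl, h2⟩
    obtain ⟨hb, h⟩ := (par_aux b c' d).2 ⟨hP, h1.symm, h2.symm⟩
    exact ⟨hb, by rcases ha with rfl | rfl <;> norm_num, (sys_aux b c' d hb).2 h⟩
end

section
/- If (a,b,c,d) ∈ ℂ⁴ with b ≠ 0 satisfies the equations (E2): a² = 1; b² + 4c/b − c² − 4cd + bc²d + 2bcd² = 0; −2 + 2bc + 2c²/b² − c⁴/4 + 2bd − 2c²d/b + c²d² = 0; −2/b² + 2d/b − d² = 0, then 24a(−1 + bc + bd)/b ≠ 0 and (6a/b²)·(−3b³ − 12c + 7bc² + 3b⁴d + 24bcd − 6b²c²d − 18b²cd² + 3b³c²d² + 6b³cd³) ≠ 0. -/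
/-- For every solution `(a,b,c,d)` of the equations (E2) with `b ≠ 0`, the left and
right quantum dimensions of the version-2 matrix factorization of `Q₁₀ − K₁₄` are
nonzero. -/
theorem quantum_dimensions_nonzero_version2 (a b c d : ℂ) (hb : b ≠ 0)
    (h1 : a^2 = 1)
    (h2 : b^2 + 4*c/b - c^2 - 4*c*d + b*c^2*d + 2*b*c*d^2 = 0)
    (h3 : -2 + 2*b*c + 2*c^2/b^2 - c^4/4 + 2*b*d - 2*c^2*d/b + c^2*d^2 = 0)
    (h4 : -2/b^2 + 2*d/b - d^2 = 0) :
    24*a*(-1 + b*c + b*d)/b ≠ 0 ∧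
    (6*a/b^2) * (-3*b^3 - 12*c + 7*b*c^2 + 3*b^4*d + 24*b*c*d - 6*b^2*c^2*d
      - 18*b^2*c*d^2 + 3*b^3*c^2*d^2 + 6*b^3*c*d^3) ≠ 0 := by
  have ha : a ≠ 0 := by
    rintro rfl
    norm_num at h1
  obtain ⟨s, hs⟩ : ∃ s, s = b * d - 1 := ⟨_, rfl⟩
  have hd : d = (1 + s) / b := by
    rw [hs]; field_simp; ring
  have hss : s^2 = -1 := by
    have e : -2/b^2 + 2*d/b - d^2 = (-1 - s^2) / b^2 := by
      rw [hd]; field_simp; ring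
    rw [e, div_eq_zero_iff] at h4
    rcases h4 with h | h
    · linear_combination -h
    · exact absurd h (pow_ne_zero 2 hb)
  have k2 : b^2 + s * c^2 = 0 := by
    have e : b^2 + 4*c/b - c^2 - 4*c*d + b*c^2*d + 2*b*c*d^2
        = b^2 + s * c^2 + 2 * c / b * (s^2 + 1) := by
      rw [hd]; field_simp; ring
    rw [e, hss] at h2
    linear_combination h2
  have k3 : 2 * s + 2 * (b * c) - c^4 / 4 = 0 := by
    have e : -2 + 2*b*c + 2*c^2/b^2 - c^4/4 + 2*b*d - 2*c^2*d/b + c^2*d^2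
        = 2 * s + 2 * (b * c) - c^4 / 4 + c^2 / b^2 * (s^2 + 1) := by
      rw [hd]; field_simp; ring
    rw [e, hss] at h3
    linear_combination h3
  have hc : c ≠ 0 := by
    rintro rfl
    apply pow_ne_zero 2 hb
    linear_combination k2
  constructor
  · refine div_ne_zero (mul_ne_zero (mul_ne_zero (by norm_num) ha) ?_) hb
    intro h
    apply pow_ne_zero 4 hc
    linear_combination (-4) * k3 + 8 * h + 8 * hs
  · refine mul_ne_zero (div_ne_zero (mul_ne_zero (by norm_num) ha) (pow_ne_zero 2 hb)) ?_
    have e : -3*b^3 - 12*c + 7*b*c^2 + 3*b^4*d + 24*b*c*d - 6*b^2*c^2*d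
      - 18*b^2*c*d^2 + 3*b^3*c^2*d^2 + 6*b^3*c*d^3
        = 4 * (b * c^2) := by
      have e1 : -3*b^3 - 12*c + 7*b*c^2 + 3*b^4*d + 24*b*c*d - 6*b^2*c^2*d
        - 18*b^2*c*d^2 + 3*b^3*c^2*d^2 + 6*b^3*c*d^3
          = 3 * s * b^3 + 4 * b * c^2 + 3 * b * c^2 * s^2 + 6 * c * s * (s^2 + 1) := by
        rw [hd]; field_simp; ring
      rw [e1]
      linear_combination 3 * s * b * k2 + 6 * c * s * hss
    rw [e]
    exact mul_ne_zero (by norm_num) (mul_ne_zero hb (pow_ne_zero 2 hc))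
end

section
/- For every integer n ≥ 1, one has 1 + 2·∑_{k=2}^{n} P₁(k) + ∑_{k=4}^{n} ∑_{i=2}^{k−2} P₁(i)·P₁(k−i) = ∑_{k=0}^{n} P(n−k)·(P(k) − P(k−1)), where P₁(k) = P(k) − P(k−1); here P(0) := 1 and P(−1) := 0. (Both sides equal the number Inv(n) of invertible potentials in n variables.) -/
/-- The partition-counting function extended to `ℤ` by `P(k) = 0` for `k < 0`
(so in particular `P(0) = 1` and `P(−1) = 0`). -/
noncomputable def Pz (k : ℤ) : ℤ :=
  if k < 0 then 0 else Fintype.card (Nat.Partition k.toNat)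

/-- `P₁(k) = P(k) − P(k−1)`, the number of partitions of `k` into parts of size
at least 2. -/
noncomputable def P₁z (k : ℤ) : ℤ := Pz k - Pz (k - 1)

theorem Pz_zero : Pz 0 = 1 := by simp [Pz]

theorem Pz_one : Pz 1 = 1 := by simp [Pz]

theorem Pz_neg_one : Pz (-1) = 0 := by simp [Pz]

theorem P₁z_zero : P₁z 0 = 1 := by simp [P₁z, Pz_zero, Pz_neg_one]

theorem P₁z_one : P₁z 1 = 0 := by simp [P₁z, Pz_zero, Pz_one]

theorem rhs_step (n : ℕ) :
    ∑ k ∈ Finset.range (n + 1 + 1), Pz (((n + 1 : ℕ) : ℤ) - k) * (Pz k - Pz ((k : ℤ) - 1)) =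
    ∑ k ∈ Finset.range (n + 1), Pz ((n : ℤ) - k) * (Pz k - Pz ((k : ℤ) - 1)) +
    ∑ k ∈ Finset.range (n + 2), P₁z k * P₁z (((n + 1 : ℕ) : ℤ) - k) := by
  have e : ∑ k ∈ Finset.range (n + 1), Pz ((n : ℤ) - k) * (Pz k - Pz ((k : ℤ) - 1)) =
      ∑ k ∈ Finset.range (n + 2), Pz ((n : ℤ) - k) * (Pz k - Pz ((k : ℤ) - 1)) := by
    rw [Finset.sum_range_succ _ (n + 1)]
    have : (n : ℤ) - ((n + 1 : ℕ) : ℤ) = -1 := by push_cast; ring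
    rw [this, Pz_neg_one]; ring
  rw [e, ← Finset.sum_add_distrib]
  refine Finset.sum_congr rfl fun k _ => ?_
  have : ((n + 1 : ℕ) : ℤ) - k - 1 = n - k := by push_cast; ring
  simp only [P₁z, this]
  ring

theorem conv_eq (j : ℕ) :
    ∑ k ∈ Finset.range (j + 3 + 2), P₁z k * P₁z (((j + 3 + 1 : ℕ) : ℤ) - k) =
    2 * P₁z ((j + 3 + 1 : ℕ) : ℤ) +
    ∑ i ∈ Finset.Icc 2 (j + 3 + 1 - 2), P₁z i * P₁z (((j + 3 + 1 : ℕ) : ℤ) - i) := by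
  have e : Finset.Icc 2 (j + 3 + 1 - 2) = Finset.Ico 2 (j + 3) := by
    ext x; simp only [Finset.mem_Icc, Finset.mem_Ico]; omega
  rw [e, Finset.sum_range_succ, Finset.sum_range_succ, Finset.range_eq_Ico,
    Finset.sum_eq_sum_Ico_succ_bot (by omega), Finset.sum_eq_sum_Ico_succ_bot (by omega)]
  have h1 : ((j + 3 + 1 : ℕ) : ℤ) - ((j + 3 : ℕ) : ℤ) = 1 := by push_cast; ring
  rw [h1, sub_self, P₁z_zero, P₁z_one]
  simp only [Nat.cast_zero, zero_add, Nat.cast_one, P₁z_zero, P₁z_one, sub_zero]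
  ring

/-- For every `n ≥ 1`,
`1 + 2·∑_{k=2}^{n} P₁(k) + ∑_{k=4}^{n} ∑_{i=2}^{k−2} P₁(i)·P₁(k−i)
  = ∑_{k=0}^{n} P(n−k)·(P(k) − P(k−1))`;
both sides equal the number `Inv(n)` of invertible potentials in `n` variables. -/
theorem inv_formulas_agree (n : ℕ) (hn : 1 ≤ n) :
    1 + 2 * (∑ k ∈ Finset.Icc 2 n, P₁z k) +
      ∑ k ∈ Finset.Icc 4 n, ∑ i ∈ Finset.Icc 2 (k - 2), P₁z i * P₁z ((k : ℤ) - i) =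
    ∑ k ∈ Finset.range (n + 1), Pz ((n : ℤ) - k) * (Pz k - Pz ((k : ℤ) - 1)) := by
  induction n, hn using Nat.le_induction with
  | base =>
    simp [Finset.sum_range_succ, Pz_zero, Pz_one, Pz_neg_one]
  | succ n hn ih =>
    rw [rhs_step, ← ih]
    obtain rfl | rfl | h : n = 1 ∨ n = 2 ∨ 3 ≤ n := by omega
    · have h1 := P₁z_zero
      have h2 := P₁z_one
      simp [Finset.sum_range_succ, h1, h2]
      ring
    · have h1 := P₁z_zero
      have h2 := P₁z_one
      rw [Finset.sum_Icc_succ_top (by omega : 2 ≤ 2 + 1)]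
      simp [Finset.sum_range_succ, h1, h2]
      ring
    · rw [Finset.sum_Icc_succ_top (by omega : 2 ≤ n + 1),
        Finset.sum_Icc_succ_top (by omega : 4 ≤ n + 1)]
      obtain ⟨j, rfl⟩ : ∃ j, n = j + 3 := ⟨n - 3, by omega⟩
      rw [conv_eq]
      push_cast
      ring_nf
end
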